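/- Let d ≥ 1, let P ⊂ ℝ^d be compact with nonempty interior, let f : P → ℝ be smooth and strictly concave with a unique maximizer x* in the interior of P at which the Hessian ∇²f(x*) is negative definite, and let g : P → ℝ be smooth, nonnegative, bounded, with g(x*) > 0. Write f* = f(x*). Then there exist a constant C > 0 and an integer N, both depending only on f, g, P (and not on n), such that for all n ≥ N, | ln( ∫_P e^{n f(x)} g(x) dx ) − ( n f* − (d/2) ln n ) | ≤ C. -/

import Mathlib

open MeasureTheory Matrix Filter Topology

noncomputable section

/-!
Near the maximizer `x` the second-order Taylor formula squeezes `f` between two parabolas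
`f x - M ‖y - x‖ ^ 2 ≤ f y ≤ f x - m ‖y - x‖ ^ 2`, and compactness extends the upper one to all
of `P`. The upper parabola dominates the integral by a Gaussian one, which is a constant times
`exp (t * f x) * t ^ (-d / 2)`. On the ball of radius `1 / √t` the lower parabola gives
`exp (t * f y) ≥ exp (t * f x - M)`, and the volume of this ball is a constant times
`t ^ (-d / 2)`, so the integral is also bounded below by a constant times the same quantity.
-/

theorem iteratedFDerivWithin_two_apply_of_mem_nhds {𝕜 E F : Type*} [NontriviallyNormedField 𝕜]
    [NormedAddCommGroup E] [NormedSpace 𝕜 E] [NormedAddCommGroup F] [NormedSpace 𝕜 F] {f : E → F}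
    {s : Set E} {x : E} (hs : s ∈ 𝓝 x) (v w : E) :
    iteratedFDerivWithin 𝕜 2 f s x ![v, w] = fderiv 𝕜 (fderiv 𝕜 f) x v w := by
  rw [iteratedFDerivWithin_congr_set (eventuallyEq_univ.2 hs) 2, iteratedFDerivWithin_univ,
    iteratedFDeriv_two_apply]
  simp

section SecondOrder

variable {E F : Type*} [NormedAddCommGroup E] [NormedSpace ℝ E] [NormedAddCommGroup F]
  [NormedSpace ℝ F]

theorem hasFDerivAt_half_smul_apply_sub_apply_sub {B : E →L[ℝ] E →L[ℝ] F}
    (hB : ∀ v w, B v w = B w v) (x z : E) :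
    HasFDerivAt (fun y ↦ (1 / 2 : ℝ) • B (y - x) (y - x)) (B (z - x)) z := by
  have hsub : HasFDerivAt (fun y ↦ y - x) (ContinuousLinearMap.id ℝ E) z :=
    (hasFDerivAt_id z).sub_const x
  refine (((B.hasFDerivAt.comp z hsub).clm_apply hsub).const_smul (1 / 2 : ℝ)).congr_fderiv ?_
  ext w
  have hsymm := hB w (z - x)
  simp only [map_sub, _root_.sub_apply] at hsymm
  simp [hsymm, ← two_smul ℝ, smul_smul]

theorem sub_taylor_two_isLittleO {f : E → F} {x : E} (hf : ContDiffAt ℝ 2 f x) :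
    (fun y ↦ f y - f x - fderiv ℝ f x (y - x)
      - (1 / 2 : ℝ) • fderiv ℝ (fderiv ℝ f) x (y - x) (y - x)) =o[𝓝 x] fun y ↦ ‖y - x‖ ^ 2 := by
  have hdiff : ∀ᶠ y in 𝓝 x, DifferentiableAt ℝ f y :=
    (hf.eventually (by simp)).mono fun y hy ↦ hy.differentiableAt two_ne_zero
  obtain ⟨r, hr, hball⟩ := Metric.eventually_nhds_iff_ball.1 hdiff
  have hsymm : IsSymmSndFDerivAt ℝ f x := hf.isSymmSndFDerivAt (by simp)
  have hderiv : ∀ z ∈ Metric.ball x r, HasFDerivWithinAt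
      (fun y ↦ f y - fderiv ℝ f x (y - x) - (1 / 2 : ℝ) • fderiv ℝ (fderiv ℝ f) x (y - x) (y - x))
      (fderiv ℝ f z - fderiv ℝ f x - fderiv ℝ (fderiv ℝ f) x (z - x)) (Metric.ball x r) z :=
    fun z hz ↦ (((hball z hz).hasFDerivAt.sub
      ((fderiv ℝ f x).hasFDerivAt.comp z ((hasFDerivAt_id z).sub_const x))).sub
      (hasFDerivAt_half_smul_apply_sub_apply_sub hsymm x z)).hasFDerivWithinAt
  have hsmall : (fun z ↦ fderiv ℝ f z - fderiv ℝ f x - fderiv ℝ (fderiv ℝ f) x (z - x))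
      =o[𝓝 x] fun z ↦ ‖z - x‖ ^ 1 := by
    have : DifferentiableAt ℝ (fderiv ℝ f) x :=
      (hf.fderiv_right (m := 1) (by norm_num)).differentiableAt one_ne_zero
    simpa using this.hasFDerivAt.isLittleO.norm_right
  have hmean := (convex_ball x r).isLittleO_pow_succ (Metric.mem_ball_self hr) hderiv
    (hsmall.mono nhdsWithin_le_nhds)
  rw [Metric.isOpen_ball.nhdsWithin_eq (Metric.mem_ball_self hr)] at hmean
  refine hmean.congr_left fun y ↦ ?_
  simp only [sub_self, map_zero, smul_zero, sub_zero]
  abel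

theorem isCoercive_of_forall_pos [FiniteDimensional ℝ E] {B : E →L[ℝ] E →L[ℝ] ℝ}
    (hB : ∀ v, v ≠ 0 → 0 < B v v) : IsCoercive B := by
  have hcont : Continuous fun v ↦ B v v := by fun_prop
  obtain ⟨c, hc, hle⟩ := (isCompact_sphere (0 : E) 1).exists_forall_le' hcont.continuousOn
    fun v hv ↦ hB v (ne_zero_of_mem_unit_sphere ⟨v, hv⟩)
  refine ⟨c, hc, fun v ↦ ?_⟩
  obtain rfl | hv := eq_or_ne v 0
  · simp
  have hnorm : 0 < ‖v‖ := norm_pos_iff.2 hv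
  have hunit := hle (‖v‖⁻¹ • v) (by simp [norm_smul, hnorm.ne'])
  simp only [map_smul, _root_.smul_apply, smul_eq_mul] at hunit
  field_simp at hunit
  linarith

theorem sub_isBigO_sq_norm_of_fderiv_eq_zero {f : E → F} {x : E} (hf : ContDiffAt ℝ 2 f x)
    (hcrit : fderiv ℝ f x = 0) : (fun y ↦ f y - f x) =O[𝓝 x] fun y ↦ ‖y - x‖ ^ 2 := by
  have hquad : (fun y ↦ fderiv ℝ (fderiv ℝ f) x (y - x) (y - x)) =O[𝓝 x] fun y ↦ ‖y - x‖ ^ 2 := by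
    refine .of_bound ‖fderiv ℝ (fderiv ℝ f) x‖ (.of_forall fun y ↦ ?_)
    rw [norm_pow, norm_norm, sq, ← mul_assoc]
    exact (fderiv ℝ (fderiv ℝ f) x).le_opNorm₂ (y - x) (y - x)
  refine ((sub_taylor_two_isLittleO hf).isBigO.add
    (hquad.const_smul_left (1 / 2 : ℝ))).congr_left fun y ↦ ?_
  simp [hcrit]

theorem exists_pos_eventually_mul_sq_norm_le_sub {f : E → ℝ} {x : E} (hf : ContDiffAt ℝ 2 f x)
    (hcrit : fderiv ℝ f x = 0) (hcoer : IsCoercive (-fderiv ℝ (fderiv ℝ f) x)) :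
    ∃ m > 0, ∀ᶠ y in 𝓝 x, m * ‖y - x‖ ^ 2 ≤ f x - f y := by
  obtain ⟨c, hc, hle⟩ := hcoer
  refine ⟨c / 4, by positivity, ?_⟩
  filter_upwards [(sub_taylor_two_isLittleO hf).def (show 0 < c / 4 by positivity)] with y hy
  have hhess := hle (y - x)
  simp only [hcrit, _root_.zero_apply, _root_.neg_apply, smul_eq_mul, sub_zero, norm_pow,
    Real.norm_eq_abs, abs_norm] at hy hhess
  linarith [(abs_le.1 hy).2]

end SecondOrder

section Maximizer

variable {X : Type*} [TopologicalSpace X] {K : Set X} {u φ : X → ℝ} {x : X}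

theorem lt_of_isMaxOn_of_forall_isMaxOn_eq {X β : Type*} [LinearOrder β] {f : X → β} {s : Set X}
    {x y : X} (hmax : IsMaxOn f s x) (huniq : ∀ z ∈ s, IsMaxOn f s z → z = x) (hy : y ∈ s)
    (hne : y ≠ x) : f y < f x :=
  (hmax hy).lt_of_ne fun heq ↦ hne (huniq y hy fun _ hz ↦ (hmax hz).trans heq.ge)

theorem exists_pos_forall_mul_le_of_isCompact (hK : IsCompact K) (hu : ContinuousOn u K)
    (hφ : ContinuousOn φ K) (hφ0 : ∀ y ∈ K, 0 ≤ φ y) (hpos : ∀ y ∈ K, y ≠ x → 0 < u y)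
    (hx : ∃ m > 0, ∀ᶠ y in 𝓝 x, m * φ y ≤ u y) : ∃ m > 0, ∀ y ∈ K, m * φ y ≤ u y := by
  -- The sets in the compactness induction need not lie in `K`, hence the doubled hypothesis.
  suffices ∃ m > 0, ∀ y ∈ K, y ∈ K → m * φ y ≤ u y by simpa using this
  refine hK.induction_on (p := fun s ↦ ∃ m > 0, ∀ y ∈ s, y ∈ K → m * φ y ≤ u y)
    ⟨1, one_pos, by simp⟩ ?mono ?union ?nhds
  case mono => exact fun s t hst ⟨m, hm, h⟩ ↦ ⟨m, hm, fun y hy ↦ h y (hst hy)⟩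
  case union =>
    rintro s t ⟨m₁, hm₁, h₁⟩ ⟨m₂, hm₂, h₂⟩
    refine ⟨min m₁ m₂, lt_min hm₁ hm₂, fun y hy hyK ↦ ?_⟩
    rcases hy with hy | hy
    · exact (mul_le_mul_of_nonneg_right (min_le_left ..) (hφ0 y hyK)).trans (h₁ y hy hyK)
    · exact (mul_le_mul_of_nonneg_right (min_le_right ..) (hφ0 y hyK)).trans (h₂ y hy hyK)
  case nhds =>
    intro z hz
    obtain rfl | hne := eq_or_ne z x
    · obtain ⟨m, hm, h⟩ := hx
      exact ⟨_, mem_nhdsWithin_of_mem_nhds h, m, hm, fun y hy _ ↦ hy⟩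
    obtain ⟨m, hm, hlt⟩ : ∃ m > 0, m * φ z < u z := by
      obtain ⟨m, hm, hlt⟩ := exists_pos_mul_lt (hpos z hz hne) (φ z)
      exact ⟨m, hm, by rwa [mul_comm]⟩
    have hnear : ∀ᶠ y in 𝓝[K] z, m * φ y < u y :=
      ((hφ z hz).const_mul m).eventually_lt (hu z hz) hlt
    exact ⟨_, hnear, m, hm, fun y hy _ ↦ hy.le⟩

end Maximizer

section IntegralBounds

variable {E : Type*} [NormedAddCommGroup E] [MeasurableSpace E] [BorelSpace E]
  {f g : E → ℝ} {s : Set E} {x : E} {c t : ℝ}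

open Module Real

theorem inv_sqrt_pow_eq_rpow (ht : 0 ≤ t) (k : ℕ) : (√t)⁻¹ ^ k = t ^ (-(k / 2 : ℝ)) := by
  rw [rpow_neg ht, inv_pow, sqrt_eq_rpow, ← rpow_natCast, ← rpow_mul ht]
  ring_nf

section Haar

variable [NormedSpace ℝ E] [FiniteDimensional ℝ E] {μ : Measure E} [μ.IsAddHaarMeasure]

theorem le_setIntegral_exp_mul_mul {M γ : ℝ} (hs : MeasurableSet s)
    (hint : IntegrableOn (fun y ↦ exp (t * f y) * g y) s μ) (hg : ∀ y ∈ s, 0 ≤ g y)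
    (hM : 0 ≤ M) (hγ : 0 ≤ γ) (ht : 0 < t) (hball : Metric.closedBall x (√t)⁻¹ ⊆ s)
    (hfM : ∀ y ∈ Metric.closedBall x (√t)⁻¹, c - f y ≤ M * ‖y - x‖ ^ 2)
    (hgγ : ∀ y ∈ Metric.closedBall x (√t)⁻¹, γ ≤ g y) :
    exp (-M) * γ * μ.real (Metric.ball (0 : E) 1) * (exp (t * c) * t ^ (-(finrank ℝ E / 2 : ℝ)))
      ≤ ∫ y in s, exp (t * f y) * g y ∂μ := by
  have hexp : ∀ y ∈ Metric.closedBall x (√t)⁻¹, t * c - M ≤ t * f y := by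
    intro y hy
    have hnorm : ‖y - x‖ ≤ (√t)⁻¹ := by simpa [dist_eq_norm] using hy
    have : t * (c - f y) ≤ M := calc
      t * (c - f y) ≤ t * (M * (√t)⁻¹ ^ 2) := by grw [hfM y hy, hnorm]
      _ = M := by rw [inv_pow, sq_sqrt ht.le]; field_simp
    linarith
  calc exp (-M) * γ * μ.real (Metric.ball (0 : E) 1)
        * (exp (t * c) * t ^ (-(finrank ℝ E / 2 : ℝ)))
      = ∫ _ in Metric.closedBall x (√t)⁻¹, exp (t * c - M) * γ ∂μ := by
        rw [setIntegral_const, Measure.addHaar_real_closedBall μ x (by positivity),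
          inv_sqrt_pow_eq_rpow ht.le, smul_eq_mul, sub_eq_add_neg, exp_add]
        ring
    _ ≤ ∫ y in Metric.closedBall x (√t)⁻¹, exp (t * f y) * g y ∂μ := by
        refine setIntegral_mono_on (integrableOn_const measure_closedBall_lt_top.ne)
          (hint.mono_set hball) measurableSet_closedBall fun y hy ↦ ?_
        gcongr
        exacts [hexp y hy, hgγ y hy]
    _ ≤ ∫ y in s, exp (t * f y) * g y ∂μ := by
        refine setIntegral_mono_set hint ?_ hball.eventuallyLE
        filter_upwards [ae_restrict_mem hs] with y hy
        exact mul_nonneg (exp_pos _).le (hg y hy)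

theorem exists_pos_eventually_mul_le_setIntegral_exp_mul (hs : MeasurableSet s) (hsx : s ∈ 𝓝 x)
    (hint : ∀ t : ℝ, IntegrableOn (fun y ↦ exp (t * f y) * g y) s μ) (hfx : ContDiffAt ℝ 2 f x)
    (hcrit : fderiv ℝ f x = 0) (hgx : ContinuousAt g x) (hg0 : ∀ y ∈ s, 0 ≤ g y)
    (hgpos : 0 < g x) :
    ∃ a > 0, ∀ᶠ t : ℝ in atTop, a * (exp (t * f x) * t ^ (-(finrank ℝ E / 2 : ℝ)))
      ≤ ∫ y in s, exp (t * f y) * g y ∂μ := by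
  obtain ⟨M, hM, hfM⟩ := (sub_isBigO_sq_norm_of_fderiv_eq_zero hfx hcrit).exists_pos
  have hnear : ∀ᶠ y in 𝓝 x, y ∈ s ∧ f x - f y ≤ M * ‖y - x‖ ^ 2 ∧ g x / 2 ≤ g y := by
    filter_upwards [hsx, hfM.bound, hgx.eventually (eventually_ge_nhds (half_lt_self hgpos))]
      with y hys hyf hyg
    simp only [norm_pow, norm_eq_abs, abs_norm] at hyf
    exact ⟨hys, by linarith [(abs_le.1 hyf).1], hyg⟩
  have hradius : Tendsto (fun t : ℝ ↦ (√t)⁻¹) atTop (𝓝 0) :=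
    tendsto_inv_atTop_zero.comp tendsto_sqrt_atTop
  have hball : 0 < μ.real (Metric.ball (0 : E) 1) :=
    ENNReal.toReal_pos (Metric.measure_ball_pos _ _ one_pos).ne' measure_ball_lt_top.ne
  refine ⟨exp (-M) * (g x / 2) * μ.real (Metric.ball (0 : E) 1), by positivity, ?_⟩
  filter_upwards [hradius.eventually (eventually_closedBall_subset hnear), eventually_gt_atTop 0]
    with t hsub ht
  exact le_setIntegral_exp_mul_mul hs (hint t) hg0 hM.le (half_pos hgpos).le ht
    (fun y hy ↦ (hsub hy).1) (fun y hy ↦ (hsub hy).2.1) fun y hy ↦ (hsub hy).2.2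

end Haar

section Gaussian

variable [InnerProductSpace ℝ E] [FiniteDimensional ℝ E]

theorem integral_exp_neg_mul_sq_norm_sub (x : E) {b : ℝ} (hb : 0 < b) :
    ∫ y, exp (-b * ‖y - x‖ ^ 2) = (π / b) ^ (finrank ℝ E / 2 : ℝ) := by
  rw [← GaussianFourier.integral_rexp_neg_mul_sq_norm hb]
  exact integral_sub_right_eq_self (fun y ↦ exp (-b * ‖y‖ ^ 2)) x

theorem integrable_exp_neg_mul_sq_norm_sub (x : E) {b : ℝ} (hb : 0 < b) :
    Integrable fun y ↦ exp (-b * ‖y - x‖ ^ 2) :=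
  Integrable.of_integral_ne_zero (by rw [integral_exp_neg_mul_sq_norm_sub x hb]; positivity)

theorem setIntegral_exp_mul_mul_le {m G : ℝ} (hs : MeasurableSet s) (hm : 0 < m) (ht : 0 < t)
    (hG : 0 ≤ G) (hfm : ∀ y ∈ s, m * ‖y - x‖ ^ 2 ≤ c - f y) (hg : ∀ y ∈ s, 0 ≤ g y)
    (hgG : ∀ y ∈ s, g y ≤ G) :
    ∫ y in s, exp (t * f y) * g y
      ≤ G * (π / m) ^ (finrank ℝ E / 2 : ℝ) * (exp (t * c) * t ^ (-(finrank ℝ E / 2 : ℝ))) := by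
  have hint := (integrable_exp_neg_mul_sq_norm_sub x (mul_pos hm ht)).const_mul (G * exp (t * c))
  calc ∫ y in s, exp (t * f y) * g y
      ≤ ∫ y in s, G * exp (t * c) * exp (-(m * t) * ‖y - x‖ ^ 2) := by
        refine integral_mono_of_nonneg ?_ hint.integrableOn ?_
        · filter_upwards [ae_restrict_mem hs] with y hy
          exact mul_nonneg (exp_pos _).le (hg y hy)
        · filter_upwards [ae_restrict_mem hs] with y hy
          rw [mul_assoc, mul_comm, ← exp_add]
          have : t * f y ≤ t * c + -(m * t) * ‖y - x‖ ^ 2 := by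
            linarith [mul_le_mul_of_nonneg_left (hfm y hy) ht.le]
          gcongr
          exact hgG y hy
    _ ≤ ∫ y, G * exp (t * c) * exp (-(m * t) * ‖y - x‖ ^ 2) :=
        setIntegral_le_integral hint (.of_forall fun y ↦ by positivity)
    _ = G * (π / m) ^ (finrank ℝ E / 2 : ℝ) * (exp (t * c) * t ^ (-(finrank ℝ E / 2 : ℝ))) := by
        rw [integral_const_mul, integral_exp_neg_mul_sq_norm_sub x (mul_pos hm ht), ← div_div,
          div_rpow (by positivity) ht.le, rpow_neg ht.le]
        ring

end Gaussian

end IntegralBounds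

theorem abs_log_sub_log_le_max {a b I q : ℝ} (ha : 0 < a) (hq : 0 < q) (haI : a * q ≤ I)
    (hIb : I ≤ b * q) : |Real.log I - Real.log q| ≤ max |Real.log a| |Real.log b| := by
  have hI : 0 < I := (mul_pos ha hq).trans_le haI
  rw [← Real.log_div hI.ne' hq.ne']
  exact abs_le_max_abs_abs (Real.log_le_log ha ((le_div_iff₀ hq).2 haI))
    (Real.log_le_log (by positivity) ((div_le_iff₀ hq).2 hIb))

section Laplace

open Module Real

variable {E : Type*} [NormedAddCommGroup E] [InnerProductSpace ℝ E] [FiniteDimensional ℝ E]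
  [MeasurableSpace E] [BorelSpace E] {P : Set E} {f g : E → ℝ} {x : E}

theorem stmt11_general (hP : IsCompact P) (hPx : P ∈ 𝓝 x) (hf : ContinuousOn f P)
    (hfx : ContDiffAt ℝ 2 f x) (hmax : ∀ y ∈ P, y ≠ x → f y < f x)
    (hHess : ∀ v, v ≠ 0 → fderiv ℝ (fderiv ℝ f) x v v < 0) (hg : IntegrableOn g P)
    (hgx : ContinuousAt g x) (hg0 : ∀ y ∈ P, 0 ≤ g y) (hgbdd : BddAbove (g '' P))
    (hgpos : 0 < g x) :
    ∃ C > 0, ∀ᶠ t : ℝ in atTop,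
      |log (∫ y in P, exp (t * f y) * g y) - (t * f x - finrank ℝ E / 2 * log t)| ≤ C := by
  have hlocal : IsLocalMax f x := by
    filter_upwards [hPx] with y hy
    obtain rfl | hne := eq_or_ne y x
    exacts [le_rfl, (hmax y hy hne).le]
  have hcrit : fderiv ℝ f x = 0 := hlocal.fderiv_eq_zero
  have hint (t : ℝ) : IntegrableOn (fun y ↦ exp (t * f y) * g y) P :=
    hg.continuousOn_mul (by fun_prop) hP
  obtain ⟨m, hm, hfm⟩ : ∃ m > 0, ∀ y ∈ P, m * ‖y - x‖ ^ 2 ≤ f x - f y :=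
    exists_pos_forall_mul_le_of_isCompact hP (by fun_prop) (by fun_prop) (fun _ _ ↦ by positivity)
      (fun y hy hne ↦ sub_pos.2 (hmax y hy hne)) (exists_pos_eventually_mul_sq_norm_le_sub hfx hcrit
        (isCoercive_of_forall_pos fun v hv ↦ by simpa using hHess v hv))
  obtain ⟨a, ha, hlower⟩ := exists_pos_eventually_mul_le_setIntegral_exp_mul hP.measurableSet hPx
    hint hfx hcrit hgx hg0 hgpos
  obtain ⟨G, hG⟩ := hgbdd
  have hgG : ∀ y ∈ P, g y ≤ G := fun y hy ↦ hG ⟨y, hy, rfl⟩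
  have hGpos : 0 < G := hgpos.trans_le (hgG x (mem_of_mem_nhds hPx))
  refine ⟨max |log a| |log (G * (π / m) ^ (finrank ℝ E / 2 : ℝ))| + 1, by positivity, ?_⟩
  filter_upwards [hlower, eventually_gt_atTop 0] with t hlow ht
  have hscale : log (exp (t * f x) * t ^ (-(finrank ℝ E / 2 : ℝ)))
      = t * f x - finrank ℝ E / 2 * log t := by
    rw [log_mul (by positivity) (by positivity), log_exp, log_rpow ht]
    ring
  rw [← hscale]
  exact (abs_log_sub_log_le_max ha (by positivity) hlow (setIntegral_exp_mul_mul_le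
    hP.measurableSet hm ht hGpos.le hfm hg0 hgG)).trans (lt_add_one _).le

end Laplace

/-- Laplace-method asymptotics of the log-partition function:
under the same hypotheses as Statement 10, with `f* = f(x*)`, there are `C > 0` and `N`
such that for all `n ≥ N`,
`|ln ∫_P e^{nf} g − (n f* − (d/2) ln n)| ≤ C`. -/
theorem stmt11 {d : ℕ} (hd : 1 ≤ d)
    (P : Set (EuclideanSpace ℝ (Fin d))) (hP : IsCompact P)
    (hPint : (interior P).Nonempty)
    (f g : EuclideanSpace ℝ (Fin d) → ℝ)
    (hf : ContDiffOn ℝ (⊤ : ℕ∞) f P) (hconc : StrictConcaveOn ℝ P f)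
    (xstar : EuclideanSpace ℝ (Fin d)) (hx : xstar ∈ interior P)
    (hmax : IsMaxOn f P xstar)
    (huniq : ∀ y ∈ P, IsMaxOn f P y → y = xstar)
    (hHess : ∀ v : EuclideanSpace ℝ (Fin d), v ≠ 0 →
      (iteratedFDerivWithin ℝ 2 f P xstar) ![v, v] < 0)
    (hg : ContDiffOn ℝ (⊤ : ℕ∞) g P) (hg0 : ∀ x ∈ P, 0 ≤ g x)
    (hgbdd : BddAbove (g '' P)) (hgx : 0 < g xstar) :
    ∃ C : ℝ, 0 < C ∧ ∃ N : ℕ, ∀ n : ℕ, N ≤ n →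
      |Real.log (∫ x in P, Real.exp (n * f x) * g x)
        - (n * f xstar - (d / 2 : ℝ) * Real.log n)| ≤ C := by
  have hPx : P ∈ 𝓝 xstar := mem_interior_iff_mem_nhds.1 hx
  have hfx : ContDiffAt ℝ 2 f xstar :=
    (hf.contDiffAt hPx).of_le (WithTop.coe_le_coe.2 (le_top : (2 : ℕ∞) ≤ ⊤))
  obtain ⟨C, hC, hbound⟩ := stmt11_general hP hPx hf.continuousOn hfx
    (fun y ↦ lt_of_isMaxOn_of_forall_isMaxOn_eq hmax huniq)
    (fun v hv ↦ by simpa only [iteratedFDerivWithin_two_apply_of_mem_nhds hPx] using hHess v hv)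
    (hg.continuousOn.integrableOn_compact hP) (hg.continuousOn.continuousAt hPx) hg0 hgbdd hgx
  rw [finrank_euclideanSpace_fin] at hbound
  exact ⟨C, hC, eventually_atTop.1 (tendsto_natCast_atTop_atTop.eventually hbound)⟩

end
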